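/- For n ≥ 2 and a finite set M of n positive integers, there is a bijection χ between k-Stirling permutations on the multiset M_k that begin with the smallest element of M, and increasing pruned even k-ary trees on M, such that ap(π) = lleaf(χ(π)). Moreover π starts with k equal letters if and only if the first k−1 children of the root of χ(π) are leaves. -/

import Mathlib

open Polynomial
open scoped Classical

noncomputable section

/-- Number of longest ascent-plateaux of the length-`L` word `v` (values in `ℕ`):
indices `i` with `v i < v (i+1) = v (i+2) = ⋯ = v (i+k)`. -/
def apWord (k L : ℕ) (v : ℕ → ℕ) : ℕ :=
  ((Finset.range L).filter fun i =>
    i + k < L ∧ v i < v (i + 1) ∧ ∀ j < k, v (i + 1 + j) = v (i + 1)).card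

/-- `w : Fin (k*n) → Fin n` is a `k`-Stirling permutation of order `n`: every letter
occurs exactly `k` times and letters lying between two equal letters are at least as
large. -/
def IsKStirling (k n : ℕ) (w : Fin (k * n) → Fin n) : Prop :=
  (∀ m : Fin n, (Finset.univ.filter fun i => w i = m).card = k) ∧
  (∀ i j l : Fin (k * n), i ≤ j → j ≤ l → w i = w l → w i ≤ w j)

/-- The word (with values in `{1,…,n}` and junk value `0` out of range) associated to a
`k`-Stirling permutation. -/
def wordOf (k n : ℕ) (w : Fin (k * n) → Fin n) : ℕ → ℕ :=
  fun i => if h : i < k * n then (w ⟨i, h⟩ : ℕ) + 1 else 0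

/-- The number `ap(π)` of longest ascent-plateaux of a `k`-Stirling permutation. -/
def apStat (k n : ℕ) (w : Fin (k * n) → Fin n) : ℕ :=
  apWord k (k * n) (wordOf k n w)

/-- The number `lap(π)` of left longest ascent-plateaux: longest ascent-plateaux of the
word `0π` obtained by prepending a zero. -/
def lapStat (k n : ℕ) (w : Fin (k * n) → Fin n) : ℕ :=
  apWord k (k * n + 1) (fun i => if i = 0 then 0 else wordOf k n w (i - 1))

/-!  Increasing pruned even `k`-ary forests on a linearly ordered label set `α` are
encoded by parent functions `f : α → Option (α × Fin k)`: `f x = some (y, s)` means the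
labeled node `x` is attached to the `s`-th (unlabeled) child of the labeled node `y`,
and `f x = none` means `x` is the root of a component.  The increasing condition says
that labels of the children of each node increase, so the ordered-tree structure is
determined by `f`; components are ordered by their (increasing) root labels.  -/

/-- The labeled node `u` has a labeled grand child (so it is an internal labeled node
carrying its `k` unlabeled children in the pruned tree). -/
def hasChild {α : Type} {k : ℕ} (f : α → Option (α × Fin k)) (u : α) : Prop :=
  ∃ x s, f x = some (u, s)

/-- `f` encodes an increasing pruned even `k`-ary forest: parents carry smaller labels. -/
def IsForest {α : Type} [LT α] {k : ℕ} (f : α → Option (α × Fin k)) : Prop :=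
  ∀ x y s, f x = some (y, s) → y < x

/-- `f` encodes an increasing pruned even `k`-ary tree: a forest with a unique root. -/
def IsTree {α : Type} [LT α] {k : ℕ} (f : α → Option (α × Fin k)) : Prop :=
  IsForest f ∧ ∃! r, f r = none

/-- `lleaf`: the number of labeled leaves. -/
noncomputable def lleafStat {α : Type} [Fintype α] {k : ℕ}
    (f : α → Option (α × Fin k)) : ℕ :=
  (Finset.univ.filter fun u => ¬ hasChild f u).card

/-- `si`: the number of singleton components (roots that are leaves). -/
noncomputable def siStat {α : Type} [Fintype α] {k : ℕ}
    (f : α → Option (α × Fin k)) : ℕ :=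
  (Finset.univ.filter fun u => f u = none ∧ ¬ hasChild f u).card

/-- A non-root labeled node is old if it carries the greatest label among all the
grand children of its grand parent. -/
def oldNode {α : Type} [LinearOrder α] {k : ℕ}
    (f : α → Option (α × Fin k)) (v : α) : Prop :=
  ∃ y s, f v = some (y, s) ∧ ∀ x : α, (∃ t, f x = some (y, t)) → x ≤ v

/-- A non-root labeled node that is not old is young. -/
def youngNode {α : Type} [LinearOrder α] {k : ℕ}
    (f : α → Option (α × Fin k)) (v : α) : Prop :=
  (∃ y s, f v = some (y, s)) ∧ ¬ oldNode f v

/-- `oleaf`: the number of old labeled leaves. -/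
noncomputable def oleafStat {α : Type} [LinearOrder α] [Fintype α] {k : ℕ}
    (f : α → Option (α × Fin k)) : ℕ :=
  (Finset.univ.filter fun v => oldNode f v ∧ ¬ hasChild f v).card

/-- `oint`: the number of old internal labeled nodes. -/
noncomputable def ointStat {α : Type} [LinearOrder α] [Fintype α] {k : ℕ}
    (f : α → Option (α × Fin k)) : ℕ :=
  (Finset.univ.filter fun v => oldNode f v ∧ hasChild f v).card

/-- `F` has no young leaves. -/
def NoYoungLeaf {α : Type} [LinearOrder α] {k : ℕ}
    (f : α → Option (α × Fin k)) : Prop :=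
  ∀ v : α, ¬ (youngNode f v ∧ ¬ hasChild f v)

/-- The generalized Foata–Strehl transformation `Φ_v`.  If `v` is an old internal node
with grand parent `u`, the subtrees hanging from the `k` children of `v` are transferred
(slotwise) to the corresponding children of `u`, turning `v` into a leaf; if `v` is a
young leaf, all subtrees hanging from the children of `u` whose root labels exceed `v`
are transferred (slotwise) to `k` freshly attached children of `v`; otherwise nothing
happens. -/
noncomputable def phi {α : Type} [LinearOrder α] {k : ℕ} (v : α)
    (f : α → Option (α × Fin k)) : α → Option (α × Fin k) :=
  match f v with
  | none => f
  | some (u, _) =>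
    if ∀ x : α, (∃ t, f x = some (u, t)) → x ≤ v then
      -- `v` is old
      if hasChild f v then
        (fun x => match f x with
          | some (w, j) => if w = v then some (u, j) else some (w, j)
          | none => none)
      else f
    else
      -- `v` is young
      if hasChild f v then f
      else
        (fun x => match f x with
          | some (w, j) => if w = u ∧ v < x then some (v, j) else some (w, j)
          | none => none)

/-- `u` is a removable old leaf of the forest `f`: an old leaf that is a grand child of
the root `r` of its component, the only leaf among the grand children of `r`, the first
`k-1` children of `r` are leaves, and the label of `u` is smaller than the label of
every later root. -/
def removableOldLeaf {α : Type} [LinearOrder α] {k : ℕ}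
    (f : α → Option (α × Fin k)) (u : α) : Prop :=
  oldNode f u ∧ ¬ hasChild f u ∧
  ∃ (r : α) (s : Fin k), f u = some (r, s) ∧ f r = none ∧
    (∀ x : α, (∃ t, f x = some (r, t)) → x ≠ u → hasChild f x) ∧
    (∀ (x : α) (j : Fin k), (j : ℕ) < k - 1 → f x ≠ some (r, j)) ∧
    (∀ r' : α, f r' = none → r < r' → u < r')

/-- `u` is a removable young leaf of the forest `f`: a young leaf that is a grand child
of the root `r` of the rightmost component such that after applying `Φ_u` the first
`k-1` children of `r` are leaves. -/
noncomputable def removableYoungLeaf {α : Type} [LinearOrder α] {k : ℕ}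
    (f : α → Option (α × Fin k)) (u : α) : Prop :=
  youngNode f u ∧ ¬ hasChild f u ∧
  ∃ (r : α) (s : Fin k), f u = some (r, s) ∧ f r = none ∧
    (∀ r' : α, f r' = none → r' ≤ r) ∧
    (∀ (x : α) (j : Fin k), (j : ℕ) < k - 1 → phi u f x ≠ some (r, j))

/-- The forest lies in the class `\overline{𝓕}_n(k)`: the rightmost tree is a singleton
or the first `k-1` children of its root are leaves. -/
def inBarClass {α : Type} [LinearOrder α] {k : ℕ}
    (f : α → Option (α × Fin k)) : Prop :=
  ∃ r : α, f r = none ∧ (∀ r' : α, f r' = none → r' ≤ r) ∧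
    (¬ hasChild f r ∨
      ∀ (x : α) (j : Fin k), (j : ℕ) < k - 1 → f x ≠ some (r, j))

/-- A `k`-Stirling permutation on the multiset `M_k` (each element of the finite set `M`
of positive integers repeated `k` times). -/
def IsKStirlingOn (k : ℕ) (M : Finset ℕ) (w : Fin (k * M.card) → {x // x ∈ M}) : Prop :=
  (∀ m : {x // x ∈ M}, (Finset.univ.filter fun i => w i = m).card = k) ∧
  (∀ i j l : Fin (k * M.card), i ≤ j → j ≤ l → w i = w l → (w i : ℕ) ≤ (w j : ℕ))

/-- `ap` for a Stirling permutation on `M_k`. -/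
def apStatOn (k : ℕ) (M : Finset ℕ) (w : Fin (k * M.card) → {x // x ∈ M}) : ℕ :=
  apWord k (k * M.card) (fun i => if h : i < k * M.card then (w ⟨i, h⟩ : ℕ) + 1 else 0)

/-! Both classes are built by adding the labels in increasing order. A new largest letter `m` enters
a Stirling word as a block `m ⋯ m` at one of the `k * (#S + 1)` positions after the first letter,
where `S` is the set of letters other than the first one; a new largest label enters a tree as a
grandchild through one of the `k` children of one of the `#S + 1` labeled nodes. The insertion
raises `ap` (resp. `lleaf`) by one unless it breaks a plateau (resp. attaches to a leaf), which
happens for `k * ap` (resp. `k * lleaf`) choices, and the condition on the start of the word (resp.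
on the children of the root) is destroyed by exactly `k - 1` other choices. So the choices can be
matched compatibly at every step, and the bijection follows by induction. The root is a leaf only
when it is alone, and it is left out of the leaf count so that the induction starts at `ap = 0`. -/

section Words

section Insertion

variable {α : Type*} {k p : ℕ} {m : α} {w : List α}

/-- The word obtained from `w` by inserting `k` consecutive copies of `m` in front of the letter
with (zero-based) index `p`. -/
def insertBlock (k p : ℕ) (m : α) (w : List α) : List α :=
  w.take p ++ (List.replicate k m ++ w.drop p)

theorem getElem?_insertBlock (hp : p ≤ w.length) (i : ℕ) :
    (insertBlock k p m w)[i]? =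
      if i < p then w[i]? else if i < p + k then some m else w[i - k]? := by
  grind [insertBlock]

theorem coe_insertBlock : (insertBlock k p m w : Multiset α) = k • {m} + (w : Multiset α) := by
  rw [Multiset.nsmul_singleton, ← Multiset.coe_replicate, Multiset.coe_add, Multiset.coe_eq_coe]
  simpa only [insertBlock, List.take_append_drop] using
    List.perm_append_comm_assoc (w.take p) (List.replicate k m) (w.drop p)

variable [DecidableEq α]

theorem filter_ne_insertBlock (hm : m ∉ w) : (insertBlock k p m w).filter (· ≠ m) = w := by
  have hw : w.filter (· ≠ m) = w := List.filter_eq_self.2 (by grind)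
  have hr : (List.replicate k m).filter (· ≠ m) = [] := by simp
  rw [insertBlock, List.filter_append, List.filter_append, hr, List.nil_append,
    ← List.filter_append, List.take_append_drop, hw]

theorem idxOf_insertBlock (hk : 1 ≤ k) (hp : p ≤ w.length) (hm : m ∉ w) :
    (insertBlock k p m w).idxOf m = p := by
  have hmem : m ∉ w.take p := fun h => hm (List.mem_of_mem_take h)
  obtain ⟨k, rfl⟩ := Nat.exists_eq_add_of_le' hk
  simp [insertBlock, List.idxOf_append_of_notMem hmem, List.replicate_succ, hp]

end Insertion

section Stirling

variable {α : Type*} [LinearOrder α] {k p : ℕ} {m r : α} {w : List α} {S : Finset α}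

/-- The Stirling condition: letters between two equal letters are at least as large. -/
def IsStirling (w : List α) : Prop :=
  w.Triplewise fun a b c => a = c → a ≤ b

theorem isStirling_iff_getElem? :
    IsStirling w ↔ ∀ (i j l : ℕ) (a b : α), i < j → j < l →
      w[i]? = some a → w[j]? = some b → w[l]? = some a → a ≤ b := by
  rw [IsStirling, List.triplewise_iff_getElem]
  constructor
  · intro h i j l a b hij hjl hi hj hl
    obtain ⟨_, rfl⟩ := List.getElem?_eq_some_iff.1 hi
    obtain ⟨_, rfl⟩ := List.getElem?_eq_some_iff.1 hj
    obtain ⟨hl, hil⟩ := List.getElem?_eq_some_iff.1 hl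
    exact h i j l hij hjl hl hil.symm
  · intro h i j l hij hjl hl hil
    exact h i j l _ _ hij hjl (List.getElem?_eq_getElem (by lia))
      (List.getElem?_eq_getElem (by lia)) (by rw [List.getElem?_eq_getElem hl, hil])

theorem IsStirling.insertBlock_of_forall_lt (hw : IsStirling w) (hp : p ≤ w.length)
    (hm : ∀ x ∈ w, x < m) : IsStirling (insertBlock k p m w) := by
  have hlt : ∀ (i : ℕ) (a : α), w[i]? = some a → a < m :=
    fun i a h => hm a (List.mem_of_getElem? h)
  rw [isStirling_iff_getElem?] at hw ⊢
  simp only [getElem?_insertBlock hp]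
  intro i j l a b hij hjl hi hj hl
  split_ifs at hi hj hl <;> grind

theorem IsStirling.exists_eq_append_replicate_append (hw : IsStirling w) (hm : ∀ x ∈ w, x ≤ m) :
    ∃ u j t, w = u ++ (List.replicate j m ++ t) ∧ m ∉ u ∧ m ∉ t := by
  induction w with
  | nil => exact ⟨[], 0, [], by simp⟩
  | cons a w ih =>
    rw [IsStirling, List.triplewise_cons] at hw
    obtain ⟨u, j, t, rfl, hu, ht⟩ := ih hw.2 (by grind)
    by_cases ha : a = m
    · subst ha
      cases u with
      | nil => exact ⟨[], j + 1, t, by simp [List.replicate_succ], hu, ht⟩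
      | cons b u =>
        have hj : j = 0 := by
          by_contra hj
          grind [List.pairwise_cons]
        exact ⟨[], 1, b :: u ++ t, by simp [hj], by simp, by grind⟩
    · exact ⟨a :: u, j, t, by simp, by grind, ht⟩

theorem IsStirling.of_sublist {v : List α} (h : v.Sublist w) (hw : IsStirling w) :
    IsStirling v := by
  induction h with
  | slnil => exact hw
  | cons _ _ ih => exact ih (List.triplewise_cons.1 hw).2
  | cons_cons _ h ih =>
    obtain ⟨hpair, hw⟩ := List.triplewise_cons.1 hw
    exact List.triplewise_cons.2 ⟨hpair.sublist h, ih hw⟩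

/-- `w` is a `k`-Stirling permutation of the multiset consisting of `k` copies of each element of
`{r} ∪ S`, and it begins with `r`. -/
structure IsStirlingWord (k : ℕ) (r : α) (S : Finset α) (w : List α) : Prop where
  coe_eq : (w : Multiset α) = k • (r ::ₘ S.val)
  isStirling : IsStirling w
  head?_eq : w.head? = some r

namespace IsStirlingWord

theorem length_eq (hw : IsStirlingWord k r S w) : w.length = k * (S.card + 1) := by
  simpa using congrArg Multiset.card hw.coe_eq

theorem mem_insert (hw : IsStirlingWord k r S w) {x : α} (hx : x ∈ w) : x ∈ insert r S := by
  rw [← Multiset.mem_coe, hw.coe_eq] at hx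
  simpa using Multiset.mem_of_mem_nsmul hx

theorem forall_lt (hw : IsStirlingWord k r S w) (hm : ∀ x ∈ insert r S, x < m) :
    ∀ x ∈ w, x < m :=
  fun x hx => hm x (hw.mem_insert hx)

theorem insertBlock_of_forall_lt (hw : IsStirlingWord k r S w) (hp : p ∈ Finset.Icc 1 w.length)
    (hm : ∀ x ∈ insert r S, x < m) : IsStirlingWord k r (insert m S) (insertBlock k p m w) where
  coe_eq := by
    have hmS : m ∉ S := fun h => (hm m (Finset.mem_insert_of_mem h)).false
    rw [coe_insertBlock, hw.coe_eq, Finset.insert_val_of_notMem hmS, ← nsmul_add,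
      Multiset.singleton_add, Multiset.cons_swap]
  isStirling := hw.isStirling.insertBlock_of_forall_lt (Finset.mem_Icc.1 hp).2 (hw.forall_lt hm)
  head?_eq := by
    obtain ⟨hp, hpw⟩ := Finset.mem_Icc.1 hp
    rw [List.head?_eq_getElem?, getElem?_insertBlock hpw, if_pos (Nat.lt_of_succ_le hp),
      ← List.head?_eq_getElem?, hw.head?_eq]

theorem exists_eq_insertBlock (hk : 1 ≤ k)
    (hw : IsStirlingWord k r (insert m S) w) (hm : ∀ x ∈ insert r S, x < m) :
    ∃ v, IsStirlingWord k r S v ∧ ∃ p ∈ Finset.Icc 1 v.length, w = insertBlock k p m v := by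
  have hmS : m ∉ S := fun h => (hm m (Finset.mem_insert_of_mem h)).false
  have hrm : r < m := hm r (Finset.mem_insert_self r S)
  obtain ⟨u, j, t, rfl, hu, ht⟩ :=
    hw.isStirling.exists_eq_append_replicate_append (m := m) fun x hx => by
      have := hw.mem_insert hx
      simp only [Finset.mem_insert, forall_eq_or_imp] at this hm
      grind
  obtain rfl : j = k := by
    simpa [List.count_eq_zero_of_not_mem hu, List.count_eq_zero_of_not_mem ht, hrm.ne',
      hmS] using congrArg (Multiset.count m) hw.coe_eq
  have hu0 : u ≠ [] := by
    rintro rfl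
    have h := hw.head?_eq
    obtain ⟨j, rfl⟩ := Nat.exists_eq_add_of_le' hk
    simp [List.replicate_succ, hrm.ne'] at h
  have huw : insertBlock j u.length m (u ++ t) = u ++ (List.replicate j m ++ t) := by
    simp [insertBlock]
  refine ⟨u ++ t, ⟨?_, IsStirling.of_sublist ?_ hw.isStirling, ?_⟩, u.length, ?_, huw.symm⟩
  · have := hw.coe_eq
    rw [← huw, coe_insertBlock, Finset.insert_val_of_notMem hmS, Multiset.cons_swap,
      ← Multiset.singleton_add, nsmul_add] at this
    exact add_left_cancel this
  · simp
  · rw [← hw.head?_eq, List.head?_append_of_ne_nil _ hu0, List.head?_append_of_ne_nil _ hu0]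
  · simpa [Nat.one_le_iff_ne_zero]

end IsStirlingWord

theorem isStirlingWord_empty_iff (hk : 1 ≤ k) :
    IsStirlingWord k r ∅ w ↔ w = List.replicate k r := by
  constructor
  · intro hw
    have hcoe := hw.coe_eq
    rwa [Finset.empty_val, Multiset.cons_zero, Multiset.nsmul_singleton,
      ← Multiset.coe_replicate, Multiset.coe_eq_coe, List.perm_replicate] at hcoe
  · rintro rfl
    refine ⟨?_, List.triplewise_iff_getElem.2 (by simp), ?_⟩
    · simp [Multiset.nsmul_singleton, Multiset.coe_replicate]
    · simp [List.head?_replicate, Nat.one_le_iff_ne_zero.1 hk]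

end Stirling

end Words

section AscentPlateaux

variable {α : Type*} [LinearOrder α] {k p i i' : ℕ} {m r : α} {w : List α}

/-- The index `i` is a longest ascent-plateau of `w`: `w_i < w_{i+1} = ⋯ = w_{i+k}`. -/
def IsAscentPlateau (k : ℕ) (w : List α) (i : ℕ) : Prop :=
  ∃ a b, a < b ∧ w[i]? = some a ∧ ∀ j ∈ Finset.Ioc i (i + k), w[j]? = some b

/-- The longest ascent-plateaux of `w`, whose number is `ap w`. -/
def ascentPlateaux (k : ℕ) (w : List α) : Finset ℕ :=
  {i ∈ Finset.range w.length | IsAscentPlateau k w i}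

/-- The insertion positions that destroy a longest ascent-plateau of `w`. -/
def plateauSlots (k : ℕ) (w : List α) : Finset ℕ :=
  (ascentPlateaux k w).biUnion fun i => Finset.Ioc i (i + k)

theorem mem_ascentPlateaux : i ∈ ascentPlateaux k w ↔ IsAscentPlateau k w i := by
  rw [ascentPlateaux, Finset.mem_filter, Finset.mem_range, and_iff_right_iff_imp]
  rintro ⟨a, b, -, ha, -⟩
  exact (List.getElem?_eq_some_iff.1 ha).1

theorem mem_plateauSlots :
    p ∈ plateauSlots k w ↔ ∃ i, IsAscentPlateau k w i ∧ p ∈ Finset.Ioc i (i + k) := by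
  simp only [plateauSlots, Finset.mem_biUnion, mem_ascentPlateaux]

theorem plateauSlots_subset : plateauSlots k w ⊆ Finset.Icc 1 w.length := by
  intro p hp
  obtain ⟨i, ⟨a, b, -, -, hb⟩, hip⟩ := mem_plateauSlots.1 hp
  have := (List.getElem?_eq_some_iff.1 (hb p hip)).1
  grind

theorem IsAscentPlateau.add_le_of_lt (hi : IsAscentPlateau k w i) (hi' : IsAscentPlateau k w i')
    (h : i < i') : i + k ≤ i' := by
  by_contra! hlt
  obtain ⟨a, b, -, -, hb⟩ := hi
  obtain ⟨a', b', hab, ha, hb'⟩ := hi'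
  have h1 := hb i' (by grind)
  have h2 := hb (i' + 1) (by grind)
  have h3 := hb' (i' + 1) (by grind)
  grind

theorem IsAscentPlateau.eq_of_mem_Ioc (hi : IsAscentPlateau k w i)
    (hi' : IsAscentPlateau k w i') (h : p ∈ Finset.Ioc i (i + k))
    (h' : p ∈ Finset.Ioc i' (i' + k)) : i = i' := by
  rcases lt_trichotomy i i' with hlt | heq | hlt
  · grind [hi.add_le_of_lt hi' hlt]
  · exact heq
  · grind [hi'.add_le_of_lt hi hlt]

theorem card_plateauSlots : (plateauSlots k w).card = (ascentPlateaux k w).card * k := by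
  rw [plateauSlots, Finset.card_biUnion]
  · simp
  · intro i hi i' hi' hne
    rw [Finset.mem_coe, mem_ascentPlateaux] at hi hi'
    exact Finset.disjoint_left.2 fun p hp hp' => hne (hi.eq_of_mem_Ioc hi' hp hp')

theorem isAscentPlateau_insertBlock (hk : 1 ≤ k) (hp : p ∈ Finset.Icc 1 w.length)
    (hm : ∀ x ∈ w, x < m) :
    IsAscentPlateau k (insertBlock k p m w) i ↔
      i + 1 = p ∨ i + k < p ∧ IsAscentPlateau k w i ∨
        p + k ≤ i ∧ IsAscentPlateau k w (i - k) := by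
  obtain ⟨hp, hpw⟩ := Finset.mem_Icc.1 hp
  have hlt : ∀ (j : ℕ) (a : α), w[j]? = some a → a < m :=
    fun j a h => hm a (List.mem_of_getElem? h)
  simp only [IsAscentPlateau, getElem?_insertBlock hpw]
  constructor
  · rintro ⟨a, b, hab, ha, hb⟩
    have hi_succ := hb (i + 1) (by grind)
    rcases lt_trichotomy (i + 1) p with hip | hip | hip
    · rcases lt_or_ge (i + k) p with hikp | hikp
      · exact .inr (.inl ⟨hikp, a, b, hab, by grind, by grind⟩)
      · have hp_eq := hb p (by grind)
        grind
    · exact .inl hip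
    · rcases lt_or_ge i (p + k) with hipk | hipk
      · have ham : a = m := by grind
        have hbm : b ≤ m := by
          split_ifs at hi_succ with h1 h2
          · exact (hlt _ _ hi_succ).le
          · exact (Option.some_inj.1 hi_succ).ge
          · exact (hlt _ _ hi_succ).le
        exact absurd (ham ▸ hab) hbm.not_gt
      · refine .inr (.inr ⟨hipk, a, b, hab, by grind, fun j hj => ?_⟩)
        rw [Finset.mem_Ioc] at hj
        have hjk := hb (j + k) (by grind)
        rwa [if_neg (by lia), if_neg (by lia), Nat.add_sub_cancel] at hjk
  · rintro (rfl | ⟨hip, a, b, hab, ha, hb⟩ | ⟨hpi, a, b, hab, ha, hb⟩)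
    · have ha : w[i]? = some w[i] := List.getElem?_eq_getElem hpw
      exact ⟨w[i], m, hlt i _ ha, by grind, by grind⟩
    · exact ⟨a, b, hab, by grind, by grind⟩
    · refine ⟨a, b, hab, by grind, fun j hj => ?_⟩
      grind [hb (j - k) (by grind)]

theorem ascentPlateaux_insertBlock (hk : 1 ≤ k) (hp : p ∈ Finset.Icc 1 w.length)
    (hm : ∀ x ∈ w, x < m) :
    ascentPlateaux k (insertBlock k p m w) =
      insert (p - 1) ({i ∈ ascentPlateaux k w | p ∉ Finset.Ioc i (i + k)}.image
        fun i => if i < p then i else i + k) := by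
  ext i
  simp only [mem_ascentPlateaux, isAscentPlateau_insertBlock hk hp hm, Finset.mem_insert,
    Finset.mem_image, Finset.mem_filter, Finset.mem_Ioc]
  rw [Finset.mem_Icc] at hp
  refine or_congr (by lia) ⟨?_, ?_⟩
  · rintro (⟨hip, hi⟩ | ⟨hpi, hi⟩)
    · exact ⟨i, ⟨hi, by lia⟩, by grind⟩
    · exact ⟨i - k, ⟨hi, by lia⟩, by grind⟩
  · rintro ⟨i, ⟨hi, hip⟩, rfl⟩
    grind

theorem card_filter_mem_Ioc_ascentPlateaux :
    {i ∈ ascentPlateaux k w | p ∈ Finset.Ioc i (i + k)}.card =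
      if p ∈ plateauSlots k w then 1 else 0 := by
  split_ifs with hp
  · obtain ⟨i, hi, hip⟩ := mem_plateauSlots.1 hp
    refine Finset.card_eq_one.2 ⟨i, Finset.eq_singleton_iff_unique_mem.2 ⟨?_, ?_⟩⟩
    · simpa [mem_ascentPlateaux, hi] using hip
    · intro i' hi'
      rw [Finset.mem_filter, mem_ascentPlateaux] at hi'
      exact hi'.1.eq_of_mem_Ioc hi hi'.2 hip
  · rw [Finset.card_eq_zero, Finset.filter_eq_empty_iff]
    exact fun i hi hip => hp (mem_plateauSlots.2 ⟨i, mem_ascentPlateaux.1 hi, hip⟩)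

theorem card_ascentPlateaux_insertBlock (hk : 1 ≤ k) (hp : p ∈ Finset.Icc 1 w.length)
    (hm : ∀ x ∈ w, x < m) :
    (ascentPlateaux k (insertBlock k p m w)).card =
      (ascentPlateaux k w).card + if p ∈ plateauSlots k w then 0 else 1 := by
  have hsplit := Finset.card_filter_add_card_filter_not (s := ascentPlateaux k w)
    fun i => p ∈ Finset.Ioc i (i + k)
  rw [card_filter_mem_Ioc_ascentPlateaux] at hsplit
  rw [ascentPlateaux_insertBlock hk hp hm, Finset.card_insert_of_notMem (by grind),
    Finset.card_image_of_injective _ (fun i i' h => by grind)]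
  grind

end AscentPlateaux

section StartsWithBlock

variable {α : Type*} {k p : ℕ} {m r : α} {w : List α}

/-- `w` starts with `k` letters equal to `r`. -/
def StartsWithBlock (k : ℕ) (r : α) (w : List α) : Prop :=
  ∀ i < k, w[i]? = some r

/-- The insertion positions that destroy an initial block of `k` letters `r`. -/
def initialBlockSlots (k : ℕ) (r : α) (w : List α) : Finset ℕ :=
  if StartsWithBlock k r w then Finset.Ico 1 k else ∅

theorem mem_initialBlockSlots :
    p ∈ initialBlockSlots k r w ↔ StartsWithBlock k r w ∧ p ∈ Finset.Ico 1 k := by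
  grind [initialBlockSlots]

theorem card_initialBlockSlots :
    (initialBlockSlots k r w).card = if StartsWithBlock k r w then k - 1 else 0 := by
  grind [initialBlockSlots, Nat.card_Ico]

theorem initialBlockSlots_subset : initialBlockSlots k r w ⊆ Finset.Icc 1 w.length := by
  intro p hp
  obtain ⟨hw, hp⟩ := mem_initialBlockSlots.1 hp
  have hlt := (List.getElem?_eq_some_iff.1 (hw p (Finset.mem_Ico.1 hp).2)).1
  exact Finset.mem_Icc.2 ⟨(Finset.mem_Ico.1 hp).1, hlt.le⟩

theorem startsWithBlock_insertBlock (hp : p ∈ Finset.Icc 1 w.length) (hrm : r ≠ m) :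
    StartsWithBlock k r (insertBlock k p m w) ↔
      StartsWithBlock k r w ∧ p ∉ initialBlockSlots k r w := by
  rw [Finset.mem_Icc] at hp
  simp only [mem_initialBlockSlots, StartsWithBlock, getElem?_insertBlock hp.2]
  grind

theorem disjoint_plateauSlots_initialBlockSlots [LinearOrder α] :
    Disjoint (plateauSlots k w) (initialBlockSlots k r w) := by
  refine Finset.disjoint_left.2 fun p hp hp' => ?_
  obtain ⟨i, ⟨a, b, hab, ha, hb⟩, hip⟩ := mem_plateauSlots.1 hp
  obtain ⟨hw, hpk⟩ := mem_initialBlockSlots.1 hp'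
  grind [hw i, hw p]

end StartsWithBlock

section Trees

section Unordered

variable {α : Type} {k : ℕ} {r m : α} {f : α → Option (α × Fin k)} {c : α × Fin k}

/-- The labeled leaves of the tree `f` other than the root, `S` being the set of non-root labels. -/
def nonrootLeaves (S : Finset α) (f : α → Option (α × Fin k)) : Finset α :=
  {x ∈ S | ¬ hasChild f x}

/-- The first `k - 1` children of the node `r` are leaves. -/
def FirstChildrenAreLeaves (r : α) (f : α → Option (α × Fin k)) : Prop :=
  ∀ (x : α) (j : Fin k), (j : ℕ) < k - 1 → f x ≠ some (r, j)

/-- The attachment slots at one of the first `k - 1` children of the node `r`, if these children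
are leaves. -/
def firstChildrenSlots (r : α) (f : α → Option (α × Fin k)) : Finset (α × Fin k) :=
  if FirstChildrenAreLeaves r f then
    {r} ×ˢ Finset.univ.filter fun j : Fin k => (j : ℕ) < k - 1
  else ∅

theorem mem_firstChildrenSlots :
    c ∈ firstChildrenSlots r f ↔ FirstChildrenAreLeaves r f ∧ c.1 = r ∧ (c.2 : ℕ) < k - 1 := by
  unfold firstChildrenSlots
  grind

theorem card_firstChildrenSlots :
    (firstChildrenSlots r f).card = if FirstChildrenAreLeaves r f then k - 1 else 0 := by
  unfold firstChildrenSlots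
  split_ifs <;> simp [Fin.card_filter_val_lt]

variable [DecidableEq α]

theorem hasChild_update_some {x : α} (hfm : f m = none) :
    hasChild (Function.update f m (some c)) x ↔ hasChild f x ∨ x = c.1 := by
  unfold hasChild
  constructor
  · rintro ⟨y, s, h⟩
    grind [Function.update_apply]
  · rintro (⟨y, s, h⟩ | rfl)
    · exact ⟨y, s, by grind [Function.update_apply]⟩
    · exact ⟨m, c.2, by simp⟩

theorem firstChildrenAreLeaves_update_some (hfm : f m = none) :
    FirstChildrenAreLeaves r (Function.update f m (some c)) ↔
      FirstChildrenAreLeaves r f ∧ c ∉ firstChildrenSlots r f := by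
  simp only [mem_firstChildrenSlots, FirstChildrenAreLeaves]
  constructor
  · intro h
    refine ⟨fun x j hj hx => h x j hj ?_, fun ⟨_, hr, hj⟩ => h m c.2 hj ?_⟩
    · grind [Function.update_apply]
    · simp [← hr]
  · rintro ⟨h, hc⟩ x j hj hx
    grind [Function.update_apply]

end Unordered

variable {α : Type} [LinearOrder α] {k : ℕ} {r m : α} {S : Finset α}
  {f : α → Option (α × Fin k)} {c : α × Fin k}

/-- `f` encodes an increasing pruned even `k`-ary tree with root `r` and set of non-root labels `S`;
the value `none` marks the root and all elements of the ambient type that are not labels. -/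
structure IsTreeOn (r : α) (S : Finset α) (f : α → Option (α × Fin k)) : Prop where
  isForest : IsForest f
  eq_none_iff : ∀ x, f x = none ↔ x ∉ S
  parent_mem : ∀ ⦃x y s⦄, f x = some (y, s) → y ∈ insert r S

namespace IsTreeOn

theorem update_some (hf : IsTreeOn r S f) (hm : ∀ x ∈ insert r S, x < m)
    (hc : c.1 ∈ insert r S) : IsTreeOn r (insert m S) (Function.update f m (some c)) where
  isForest := by
    intro x y s
    have := @hf.isForest x y s
    grind [Function.update_apply]
  eq_none_iff := by
    intro x
    have := hf.eq_none_iff x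
    grind [Function.update_apply]
  parent_mem := by
    intro x y s
    have := @hf.parent_mem x y s
    grind [Function.update_apply]

theorem exists_eq_update (hf : IsTreeOn r (insert m S) f) (hm : ∀ x ∈ insert r S, x < m) :
    ∃ g c, IsTreeOn r S g ∧ c.1 ∈ insert r S ∧ f = Function.update g m (some c) := by
  have hmS : m ∉ S := fun h => (hm m (Finset.mem_insert_of_mem h)).false
  obtain ⟨c, hc⟩ := Option.ne_none_iff_exists'.1 (by grind [hf.eq_none_iff m] : f m ≠ none)
  have hc' := hf.parent_mem (x := m) (y := c.1) (s := c.2) hc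
  have hcm := hf.isForest m c.1 c.2 hc
  refine ⟨Function.update f m none, c, ⟨?_, ?_, ?_⟩, by grind, ?_⟩
  · intro x y s
    have := @hf.isForest x y s
    grind [Function.update_apply]
  · intro x
    have := hf.eq_none_iff x
    grind [Function.update_apply]
  · intro x y s h
    obtain ⟨hxm, hfx⟩ : x ≠ m ∧ f x = some (y, s) := by grind [Function.update_apply]
    have hxS : x ∈ S := by grind [hf.eq_none_iff x]
    have hym : y < m := (hf.isForest x y s hfx).trans (hm x (Finset.mem_insert_of_mem hxS))
    grind [hf.parent_mem hfx]
  · rw [Function.update_idem, ← hc, Function.update_eq_self]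

end IsTreeOn

theorem isTreeOn_empty_iff : IsTreeOn r ∅ f ↔ f = fun _ => none := by
  refine ⟨fun hf => funext fun _ => (hf.eq_none_iff _).2 (Finset.notMem_empty _), ?_⟩
  rintro rfl
  exact ⟨fun _ _ _ h => by simp at h, by simp, fun _ _ _ h => by simp at h⟩

theorem card_nonrootLeaves_update_some (hf : IsTreeOn r S f) (hm : ∀ x ∈ insert r S, x < m)
    (hc : c.1 ∈ insert r S) :
    (nonrootLeaves (insert m S) (Function.update f m (some c))).card =
      (nonrootLeaves S f).card + if c.1 ∈ nonrootLeaves S f then 0 else 1 := by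
  have hmS : m ∉ S := fun h => (hm m (Finset.mem_insert_of_mem h)).false
  have hfm : f m = none := (hf.eq_none_iff m).2 hmS
  have hleaf : ¬ hasChild f m := fun ⟨x, s, h⟩ => (hm m (hf.parent_mem h)).false
  have hins : nonrootLeaves (insert m S) (Function.update f m (some c)) =
      insert m ((nonrootLeaves S f).erase c.1) := by
    ext x
    simp only [nonrootLeaves, Finset.mem_filter, hasChild_update_some hfm, Finset.mem_insert,
      Finset.mem_erase]
    grind
  rw [hins, Finset.card_insert_of_notMem (by grind [nonrootLeaves])]
  grind [Finset.card_erase_add_one, Finset.erase_eq_of_notMem]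

end Trees

section Matching

variable {ι κ γ : Type*}

theorem card_subtype_fiber (A : Finset ι) (f : ι → γ) (c : γ) :
    Fintype.card {a : A // f a = c} = {a ∈ A | f a = c}.card := by
  rw [← Fintype.card_coe]
  exact Fintype.card_congr ((Equiv.subtypeSubtypeEquivSubtypeInter (· ∈ A) (f · = c)).trans
    (Equiv.subtypeEquivRight fun a => by simp))

theorem exists_equiv_comp_eq [Finite γ] {A : Finset ι} {B : Finset κ} (f : ι → γ) (g : κ → γ)
    (c₀ : γ) (hAB : A.card = B.card)
    (hfib : ∀ c ≠ c₀, {a ∈ A | f a = c}.card = {b ∈ B | g b = c}.card) :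
    ∃ e : A ≃ B, ∀ a : A, g (e a) = f a := by
  have := Fintype.ofFinite γ
  have hfib₀ : {a ∈ A | f a = c₀}.card = {b ∈ B | g b = c₀}.card := by
    have hA := Finset.card_eq_sum_card_fiberwise (f := f) (s := A) (t := Finset.univ) (by simp)
    have hB := Finset.card_eq_sum_card_fiberwise (f := g) (s := B) (t := Finset.univ) (by simp)
    rw [← Finset.add_sum_erase _ _ (Finset.mem_univ c₀)] at hA hB
    rw [Finset.sum_congr rfl fun c hc => hfib c (Finset.ne_of_mem_erase hc)] at hA
    lia
  have hequiv (c : γ) : Nonempty ({a : A // f a = c} ≃ {b : B // g b = c}) := by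
    have hc : {a ∈ A | f a = c}.card = {b ∈ B | g b = c}.card := by
      by_cases h : c = c₀
      · exact h ▸ hfib₀
      · exact hfib c h
    exact ⟨Fintype.equivOfCardEq (by rw [card_subtype_fiber, card_subtype_fiber, hc])⟩
  exact ⟨.ofFiberEquiv fun c => (hequiv c).some,
    Equiv.ofFiberEquiv_map fun c => (hequiv c).some⟩

theorem exists_equiv_mem_iff_mem {A P Q : Finset ι} {B P' Q' : Finset κ}
    (hPA : P ⊆ A) (hQA : Q ⊆ A) (hPQ : Disjoint P Q)
    (hPB : P' ⊆ B) (hQB : Q' ⊆ B) (hPQ' : Disjoint P' Q')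
    (hAB : A.card = B.card) (hP : P.card = P'.card) (hQ : Q.card = Q'.card) :
    ∃ e : A ≃ B, ∀ a : A, ((e a : κ) ∈ P' ↔ (a : ι) ∈ P) ∧ ((e a : κ) ∈ Q' ↔ (a : ι) ∈ Q) := by
  rw [Finset.disjoint_left] at hPQ hPQ'
  obtain ⟨e, he⟩ := exists_equiv_comp_eq (fun a => (decide (a ∈ P), decide (a ∈ Q)))
    (fun b => (decide (b ∈ P'), decide (b ∈ Q'))) (false, false) hAB (by
      rintro ⟨c, c'⟩ hc
      cases c <;> cases c'
      · exact absurd rfl hc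
      · convert hQ using 2 <;> grind
      · convert hP using 2 <;> grind
      · grind [Finset.card_eq_zero])
  exact ⟨e, fun a => by simpa using he a⟩

end Matching

section Insertion

variable {α : Type} [LinearOrder α] {k : ℕ} {r m : α} {S : Finset α}

/-- A word on `{r, m} ∪ S` with maximal letter `m` is a word on `{r} ∪ S` together with the position
of the block of letters `m`. -/
def insertBlockEquiv (hk : 1 ≤ k) (hm : ∀ x ∈ insert r S, x < m) :
    {w // IsStirlingWord k r S w} × Finset.Icc 1 (k * (S.card + 1)) ≃
      {w // IsStirlingWord k r (insert m S) w} :=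
  .ofBijective
    (fun x => ⟨insertBlock k x.2 m x.1,
      x.1.2.insertBlock_of_forall_lt (x.1.2.length_eq.symm ▸ x.2.2) hm⟩) <| by
    constructor
    · rintro ⟨⟨w, hw⟩, p, hp⟩ ⟨⟨w', hw'⟩, p', hp'⟩ h
      replace h : insertBlock k p m w = insertBlock k p' m w' := congrArg Subtype.val h
      have hmw : m ∉ w := fun h => (hw.forall_lt hm m h).false
      have hmw' : m ∉ w' := fun h => (hw'.forall_lt hm m h).false
      have hpw : p ≤ w.length := hw.length_eq ▸ (Finset.mem_Icc.1 hp).2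
      have hpw' : p' ≤ w'.length := hw'.length_eq ▸ (Finset.mem_Icc.1 hp').2
      obtain rfl : w = w' := by
        rw [← filter_ne_insertBlock hmw, h, filter_ne_insertBlock hmw']
      obtain rfl : p = p' := by
        rw [← idxOf_insertBlock hk hpw hmw, h, idxOf_insertBlock hk hpw' hmw']
      rfl
    · rintro ⟨w, hw⟩
      obtain ⟨v, hv, p, hp, rfl⟩ := hw.exists_eq_insertBlock hk hm
      exact ⟨⟨⟨v, hv⟩, p, hv.length_eq ▸ hp⟩, rfl⟩

/-- A tree on `{r, m} ∪ S` with maximal label `m` is a tree on `{r} ∪ S` together with the slot to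
which `m` is attached. -/
def attachEquiv (hm : ∀ x ∈ insert r S, x < m) :
    {f : α → Option (α × Fin k) // IsTreeOn r S f} ×
        (insert r S ×ˢ Finset.univ : Finset (α × Fin k)) ≃
      {f : α → Option (α × Fin k) // IsTreeOn r (insert m S) f} :=
  .ofBijective
    (fun x => ⟨Function.update x.1 m (some x.2),
      x.1.2.update_some hm (Finset.mem_product.1 x.2.2).1⟩) <| by
    constructor
    · rintro ⟨⟨f, hf⟩, c, hc⟩ ⟨⟨f', hf'⟩, c', hc'⟩ h
      replace h : Function.update f m (some c) = Function.update f' m (some c') :=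
        congrArg Subtype.val h
      have hmS : m ∉ S := fun h => (hm m (Finset.mem_insert_of_mem h)).false
      obtain rfl : c = c' := by simpa using congrFun h m
      obtain rfl : f = f' := by
        funext x
        rcases eq_or_ne x m with rfl | hx
        · rw [(hf.eq_none_iff x).2 hmS, (hf'.eq_none_iff x).2 hmS]
        · simpa [hx] using congrFun h x
      rfl
    · rintro ⟨f, hf⟩
      obtain ⟨g, c, hg, hc, rfl⟩ := hf.exists_eq_update hm
      exact ⟨⟨⟨g, hg⟩, c, by simpa using hc⟩, rfl⟩

variable {w : List α} {f : α → Option (α × Fin k)}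

/-- The word `w` and the tree `f` have matching statistics. -/
structure StatsMatch (r : α) (S : Finset α) (w : List α) (f : α → Option (α × Fin k)) : Prop where
  card_eq : (ascentPlateaux k w).card = (nonrootLeaves S f).card
  startsWithBlock_iff : StartsWithBlock k r w ↔ FirstChildrenAreLeaves r f

theorem StatsMatch.exists_slot_equiv (h : StatsMatch r S w f) (hr : r ∉ S)
    (hw : w.length = k * (S.card + 1)) :
    ∃ e : Finset.Icc 1 (k * (S.card + 1)) ≃
        (insert r S ×ˢ Finset.univ : Finset (α × Fin k)),
      ∀ p, ((e p).1.1 ∈ nonrootLeaves S f ↔ p.1 ∈ plateauSlots k w) ∧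
        ((e p).1 ∈ firstChildrenSlots r f ↔ p.1 ∈ initialBlockSlots k r w) := by
  have hrL : r ∉ nonrootLeaves S f := fun h => hr (Finset.mem_filter.1 h).1
  rw [← hw]
  obtain ⟨e, he⟩ := exists_equiv_mem_iff_mem (A := Finset.Icc 1 w.length)
    (B := insert r S ×ˢ (Finset.univ : Finset (Fin k)))
    (P := plateauSlots k w) (Q := initialBlockSlots k r w)
    (P' := nonrootLeaves S f ×ˢ Finset.univ) (Q' := firstChildrenSlots r f)
    plateauSlots_subset initialBlockSlots_subset disjoint_plateauSlots_initialBlockSlots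
    (by grind [nonrootLeaves]) (by grind [mem_firstChildrenSlots])
    (by grind [Finset.disjoint_left, mem_firstChildrenSlots])
    (by simp [hr, hw, mul_comm])
    (by simp [card_plateauSlots, h.card_eq])
    (by simp [card_initialBlockSlots, card_firstChildrenSlots, h.startsWithBlock_iff])
  exact ⟨e, fun p => by simpa using he p⟩

theorem StatsMatch.insert (h : StatsMatch r S w f) (hk : 1 ≤ k) (hw : IsStirlingWord k r S w)
    (hf : IsTreeOn r S f) (hm : ∀ x ∈ insert r S, x < m) {p : ℕ} {c : α × Fin k}
    (hp : p ∈ Finset.Icc 1 w.length) (hc : c.1 ∈ insert r S)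
    (hplateau : c.1 ∈ nonrootLeaves S f ↔ p ∈ plateauSlots k w)
    (hinitial : c ∈ firstChildrenSlots r f ↔ p ∈ initialBlockSlots k r w) :
    StatsMatch r (insert m S) (insertBlock k p m w) (Function.update f m (some c)) where
  card_eq := by
    simp only [card_ascentPlateaux_insertBlock hk hp (hw.forall_lt hm),
      card_nonrootLeaves_update_some hf hm hc, h.card_eq, hplateau]
  startsWithBlock_iff := by
    have hmS : m ∉ S := fun h => (hm m (Finset.mem_insert_of_mem h)).false
    rw [startsWithBlock_insertBlock hp (hm r (Finset.mem_insert_self r S)).ne,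
      firstChildrenAreLeaves_update_some ((hf.eq_none_iff m).2 hmS), h.startsWithBlock_iff,
      hinitial]

theorem exists_equiv_insert (hk : 1 ≤ k) (hr : r ∉ S) (hm : ∀ x ∈ insert r S, x < m)
    (e : {w // IsStirlingWord k r S w} ≃ {f : α → Option (α × Fin k) // IsTreeOn r S f})
    (he : ∀ w, StatsMatch r S w.1 (e w).1) :
    ∃ e' : {w // IsStirlingWord k r (insert m S) w} ≃
        {f : α → Option (α × Fin k) // IsTreeOn r (insert m S) f},
      ∀ w, StatsMatch r (insert m S) w.1 (e' w).1 := by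
  choose φ hφ using fun w => (he w).exists_slot_equiv hr w.2.length_eq
  refine ⟨(insertBlockEquiv hk hm).symm.trans ((Equiv.prodShear e φ).trans (attachEquiv hm)), ?_⟩
  intro w'
  obtain ⟨⟨w, p⟩, rfl⟩ := (insertBlockEquiv hk hm).surjective w'
  simp only [Equiv.trans_apply, Equiv.symm_apply_apply]
  exact (he w).insert hk w.2 (e w).2 hm (w.2.length_eq.symm ▸ p.2)
    (Finset.mem_product.1 (φ w p).2).1 (hφ w p).1 (hφ w p).2

theorem statsMatch_empty (hk : 1 ≤ k) :
    StatsMatch (k := k) r ∅ (List.replicate k r) fun _ => none where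
  card_eq := by
    have hnone : ∀ i, ¬ IsAscentPlateau k (List.replicate k r) i := by
      rintro i ⟨a, b, hab, ha, hb⟩
      have := hb (i + 1) (by grind)
      grind
    simp [Finset.card_eq_zero, Finset.eq_empty_iff_forall_notMem, mem_ascentPlateaux, hnone,
      nonrootLeaves]
  startsWithBlock_iff := by simp +contextual [StartsWithBlock, FirstChildrenAreLeaves]

theorem exists_equiv_isStirlingWord_isTreeOn (hk : 1 ≤ k) (hr : ∀ x ∈ S, r < x) :
    ∃ e : {w // IsStirlingWord k r S w} ≃ {f : α → Option (α × Fin k) // IsTreeOn r S f},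
      ∀ w, StatsMatch r S w.1 (e w).1 := by
  induction S using Finset.induction_on_max with
  | empty =>
    let e : {w // IsStirlingWord k r ∅ w} ≃ {f : α → Option (α × Fin k) // IsTreeOn r ∅ f} :=
      (Equiv.subtypeEquivRight fun _ => isStirlingWord_empty_iff hk).trans
        ((Equiv.ofUnique _ _).trans (Equiv.subtypeEquivRight fun _ => isTreeOn_empty_iff).symm)
    refine ⟨e, fun w => ?_⟩
    rw [(isStirlingWord_empty_iff hk).1 w.2, isTreeOn_empty_iff.1 (e w).2]
    exact statsMatch_empty hk
  | insert m S hm ih =>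
    rw [Finset.forall_mem_insert] at hr
    obtain ⟨e, he⟩ := ih hr.2
    exact exists_equiv_insert hk (fun h => (hr.2 r h).false)
      (Finset.forall_mem_insert _ _ _ |>.2 ⟨hr.1, hm⟩) e he

end Insertion

section Transport

theorem cons_univ_erase_val {α : Type*} [Fintype α] [DecidableEq α] (a : α) :
    a ::ₘ (Finset.univ.erase a).val = Finset.univ.val := by
  rw [Finset.erase_val, Multiset.cons_erase (Finset.mem_univ_val a)]

section Words

variable {N k : ℕ}

theorem coe_ofFn_eq_nsmul_univ_iff {α : Type*} [Fintype α] [DecidableEq α] {w : Fin N → α} :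
    (List.ofFn w : Multiset α) = k • Finset.univ.val ↔
      ∀ a, (Finset.univ.filter fun i => w i = a).card = k := by
  simp only [← Fin.univ_val_map, Multiset.ext, Multiset.count_map, Multiset.count_nsmul,
    Multiset.count_univ, mul_one, eq_comm (b := w _)]
  rfl

theorem isStirling_ofFn_iff {α : Type*} [LinearOrder α] {w : Fin N → α} :
    IsStirling (List.ofFn w) ↔ ∀ i j l, i ≤ j → j ≤ l → w i = w l → w i ≤ w j := by
  rw [IsStirling, List.triplewise_iff_getElem]
  simp only [List.getElem_ofFn, List.length_ofFn]
  constructor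
  · intro h i j l hij hjl hil
    rcases hij.eq_or_lt with rfl | hij
    · exact le_rfl
    rcases hjl.eq_or_lt with rfl | hjl
    · exact hil.le
    exact h i j l hij hjl l.2 hil
  · intro h i j l hij hjl hl
    exact h ⟨i, by lia⟩ ⟨j, by lia⟩ ⟨l, hl⟩ hij.le hjl.le

variable {M : Finset ℕ} {r : {x // x ∈ M}} {w : Fin (k * M.card) → {x // x ∈ M}}

theorem isKStirlingOn_iff : IsKStirlingOn k M w ↔
    (List.ofFn w : Multiset {x // x ∈ M}) = k • Finset.univ.val ∧ IsStirling (List.ofFn w) := by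
  rw [coe_ofFn_eq_nsmul_univ_iff, isStirling_ofFn_iff]
  rfl

theorem isStirlingWord_ofFn_iff (h0 : 0 < k * M.card) (hr : IsBot r) :
    IsStirlingWord k r (Finset.univ.erase r) (List.ofFn w) ↔
      IsKStirlingOn k M w ∧ ∀ h0 : 0 < k * M.card, ∀ x ∈ M, (w ⟨0, h0⟩ : ℕ) ≤ x := by
  have hhead : (List.ofFn w).head? = some r ↔
      ∀ h0 : 0 < k * M.card, ∀ x ∈ M, (w ⟨0, h0⟩ : ℕ) ≤ x := by
    rw [List.head?_eq_getElem?, List.getElem?_ofFn, dif_pos h0, Option.some_inj]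
    exact ⟨fun h _ x hx => h ▸ hr ⟨x, hx⟩, fun h => le_antisymm (h h0 r r.2) (hr _)⟩
  rw [← hhead, isKStirlingOn_iff, ← cons_univ_erase_val r]
  exact ⟨fun h => ⟨⟨h.coe_eq, h.isStirling⟩, h.head?_eq⟩, fun h => ⟨h.1.1, h.1.2, h.2⟩⟩

/-- Listing the values of a function identifies the `k`-Stirling permutations of `M_k` that begin
with the smallest element `r` with the words on `{r} ∪ (M \ {r})`. -/
def ofFnEquiv (h0 : 0 < k * M.card) (hr : IsBot r) :
    {w : Fin (k * M.card) → {x // x ∈ M} //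
        IsKStirlingOn k M w ∧ ∀ h0 : 0 < k * M.card, ∀ x ∈ M, (w ⟨0, h0⟩ : ℕ) ≤ x} ≃
      {w // IsStirlingWord k r (Finset.univ.erase r) w} :=
  .ofBijective (fun w => ⟨List.ofFn w.1, (isStirlingWord_ofFn_iff h0 hr).2 w.2⟩) <| by
    constructor
    · intro w w' h
      exact Subtype.ext (List.ofFn_injective (congrArg Subtype.val h))
    · rintro ⟨w, hw⟩
      have hlen : w.length = k * M.card := by
        rw [hw.length_eq, Finset.card_erase_add_one (Finset.mem_univ r), Finset.card_univ,
          Fintype.card_coe]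
      have hw' : List.ofFn (fun i : Fin (k * M.card) => w[i]) = w :=
        List.ext_getElem (by simp [hlen]) (by simp)
      exact ⟨⟨_, (isStirlingWord_ofFn_iff h0 hr).1 (hw'.symm ▸ hw)⟩, Subtype.ext hw'⟩

theorem isAscentPlateau_ofFn_iff {i : ℕ} (hk : 1 ≤ k) :
    IsAscentPlateau k (List.ofFn w) i ↔
      ∃ h : i + k < k * M.card, w ⟨i, by lia⟩ < w ⟨i + 1, by lia⟩ ∧
        ∀ (j : ℕ) (hj : j < k), w ⟨i + 1 + j, by lia⟩ = w ⟨i + 1, by lia⟩ := by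
  simp only [IsAscentPlateau, List.getElem?_ofFn, Finset.mem_Ioc]
  constructor
  · rintro ⟨a, b, hab, ha, hb⟩
    have h1 := hb (i + 1) (by lia)
    have hik := hb (i + k) (by lia)
    have h : i + k < k * M.card := by grind
    refine ⟨h, by grind, fun j hj => ?_⟩
    have := hb (i + 1 + j) (by lia)
    grind
  · rintro ⟨h, hlt, heq⟩
    refine ⟨_, _, hlt, by grind, fun j hj => ?_⟩
    have := heq (j - (i + 1)) (by lia)
    grind

theorem apStatOn_eq_card_ascentPlateaux (hk : 1 ≤ k) :
    apStatOn k M w = (ascentPlateaux k (List.ofFn w)).card := by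
  rw [apStatOn, apWord, ascentPlateaux, List.length_ofFn]
  congr 1
  refine Finset.filter_congr fun i _ => ?_
  rw [isAscentPlateau_ofFn_iff hk, ← exists_prop]
  refine exists_congr fun h => ?_
  rw [dif_pos (by lia), dif_pos (by lia), Nat.add_lt_add_iff_right, Subtype.coe_lt_coe]
  refine and_congr_right fun _ => forall₂_congr fun j hj => ?_
  rw [dif_pos (by lia), Nat.add_right_cancel_iff, Subtype.coe_inj]

theorem startsWithBlock_ofFn_iff (h0 : 0 < k * M.card) (hr : w ⟨0, h0⟩ = r) :
    StartsWithBlock k r (List.ofFn w) ↔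
      ∀ i : Fin (k * M.card), (i : ℕ) < k → ∀ h0 : 0 < k * M.card, w i = w ⟨0, h0⟩ := by
  have hkM : k ≤ k * M.card := Nat.le_mul_of_pos_right k (Nat.pos_of_mul_pos_left h0)
  simp only [StartsWithBlock, List.getElem?_ofFn, hr]
  constructor
  · intro h i hi _
    simpa using h i hi
  · intro h i hi
    rw [dif_pos (hi.trans_le hkM), h ⟨i, hi.trans_le hkM⟩ hi h0]

end Words

section Trees

variable {α : Type} [LinearOrder α] {k : ℕ} {r : α} {S : Finset α} {f : α → Option (α × Fin k)}

theorem IsTreeOn.hasChild_root (hf : IsTreeOn r S f) (hS : S.Nonempty) : hasChild f r := by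
  obtain ⟨⟨y, s⟩, hy⟩ := Option.ne_none_iff_exists'.1
    (by simpa [hf.eq_none_iff] using S.min'_mem hS : f (S.min' hS) ≠ none)
  have hyS : y ∉ S := fun h => (S.min'_le y h).not_gt (hf.isForest _ y s hy)
  obtain rfl : y = r := (Finset.mem_insert.1 (hf.parent_mem hy)).resolve_right hyS
  exact ⟨_, s, hy⟩

variable [Fintype α]

theorem isTree_iff_isTreeOn (hr : IsBot r) : IsTree f ↔ IsTreeOn r (Finset.univ.erase r) f := by
  constructor
  · rintro ⟨hf, t, -, htu⟩
    have hroot : f r = none := by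
      by_contra h
      obtain ⟨⟨y, s⟩, hy⟩ := Option.ne_none_iff_exists'.1 h
      exact (hr y).not_gt (hf r y s hy)
    refine ⟨hf, fun x => ?_, fun x y s _ => by simp⟩
    suffices f x = none ↔ x = r by simpa
    exact ⟨fun hx => (htu x hx).trans (htu r hroot).symm, fun h => h ▸ hroot⟩
  · intro hf
    exact ⟨hf.isForest, r, by simp [hf.eq_none_iff], fun x hx => by simpa [hf.eq_none_iff] using hx⟩

theorem IsTreeOn.lleafStat_eq [Nontrivial α] (hf : IsTreeOn r (Finset.univ.erase r) f) :
    lleafStat f = (nonrootLeaves (Finset.univ.erase r) f).card := by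
  have hroot := hf.hasChild_root Finset.univ_nontrivial.erase_nonempty
  rw [lleafStat, nonrootLeaves]
  congr 1
  ext x
  grind

theorem IsTreeOn.firstChildrenAreLeaves_iff (hf : IsTreeOn r (Finset.univ.erase r) f) :
    FirstChildrenAreLeaves r f ↔
      ∀ (t x : α) (j : Fin k), f t = none → (j : ℕ) < k - 1 → f x ≠ some (t, j) := by
  have hroot : ∀ t, f t = none ↔ t = r := fun t => by simp [hf.eq_none_iff]
  simp only [hroot]
  exact ⟨fun h t x j ht => ht ▸ h x j, fun h x j => h r x j rfl⟩

end Trees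

end Transport

/-- For `n = |M| ≥ 2` there is a bijection `χ` between `k`-Stirling permutations on
`M_k` beginning with the smallest element of `M` and increasing pruned even `k`-ary
trees on `M`, with `ap(π) = lleaf(χ(π))`; moreover `π` starts with `k` equal letters iff
the first `k-1` children of the root of `χ(π)` are leaves. -/
theorem stirling_tree_bijection (k : ℕ) (hk : 1 ≤ k) (M : Finset ℕ)
    (hM : 2 ≤ M.card) (hpos : ∀ x ∈ M, 0 < x) :
    ∃ e : {w : Fin (k * M.card) → {x // x ∈ M} //
        IsKStirlingOn k M w ∧
          ∀ h0 : 0 < k * M.card, ∀ x ∈ M, ((w ⟨0, h0⟩ : ℕ)) ≤ x} ≃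
        {f : {x // x ∈ M} → Option ({x // x ∈ M} × Fin k) // IsTree f},
      ∀ w, apStatOn k M w.1 = lleafStat (e w).1 ∧
        ((∀ i : Fin (k * M.card), (i : ℕ) < k → ∀ h0 : 0 < k * M.card, w.1 i = w.1 ⟨0, h0⟩)
          ↔ (∀ (r x : {x // x ∈ M}) (j : Fin k), (e w).1 r = none →
              (j : ℕ) < k - 1 → (e w).1 x ≠ some (r, j))) := by
  have h0 : 0 < k * M.card := Nat.mul_pos hk (by lia)
  have : Nontrivial {x // x ∈ M} :=
    Fintype.one_lt_card_iff_nontrivial.1 (by rwa [Fintype.card_coe])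
  obtain ⟨r, hr : IsBot r⟩ := Finite.exists_min (id : {x // x ∈ M} → {x // x ∈ M})
  obtain ⟨e, he⟩ := exists_equiv_isStirlingWord_isTreeOn (r := r) (S := Finset.univ.erase r) hk
    fun x hx => (hr x).lt_of_ne (Finset.ne_of_mem_erase hx).symm
  refine ⟨(ofFnEquiv h0 hr).trans
    (e.trans (Equiv.subtypeEquivRight fun _ => isTree_iff_isTreeOn hr).symm), fun w => ?_⟩
  have hw0 : w.1 ⟨0, h0⟩ = r := le_antisymm (w.2.2 h0 r r.2) (hr _)
  have htree := (e (ofFnEquiv h0 hr w)).2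
  have hstats := he (ofFnEquiv h0 hr w)
  constructor
  · exact (apStatOn_eq_card_ascentPlateaux hk).trans (hstats.card_eq.trans htree.lleafStat_eq.symm)
  · exact (startsWithBlock_ofFn_iff h0 hw0).symm.trans
      (hstats.startsWithBlock_iff.trans htree.firstChildrenAreLeaves_iff)

end
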